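/- The set G = {a(x) : x ∈ ℝ⁷} is a subgroup of GL(12,ℝ): it contains the identity matrix (equal to a(0)), and it is closed under matrix multiplication and matrix inversion. -/

import Mathlib

noncomputable section

open Matrix

/-- The upper-left 6×6 block `A₁(x)`. Coordinates: `x 0 = x₁`, ..., `x 6 = x₇`. -/
def A1 (x : Fin 7 → ℝ) : Matrix (Fin 6) (Fin 6) ℝ :=
  !![1, -x 1, x 0, x 3, -(x 0 * x 1), x 5;
     0, 1, 0, -x 0, x 0, x 0 ^ 2 / 2;
     0, 0, 1, 0, -x 1, -x 3;
     0, 0, 0, 1, 0, 0;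
     0, 0, 0, 0, 1, x 0;
     0, 0, 0, 0, 0, 1]

/-- The lower-right 6×6 block `A₂(x)`, obtained from `A₁(x)` by replacing
`x₂, x₄, x₆` with `x₃, x₅, x₇`. -/
def A2 (x : Fin 7 → ℝ) : Matrix (Fin 6) (Fin 6) ℝ :=
  !![1, -x 2, x 0, x 4, -(x 0 * x 2), x 6;
     0, 1, 0, -x 0, x 0, x 0 ^ 2 / 2;
     0, 0, 1, 0, -x 2, -x 4;
     0, 0, 0, 1, 0, 0;
     0, 0, 0, 0, 1, x 0;
     0, 0, 0, 0, 0, 1]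

/-- The block-diagonal 12×12 matrix `a(x) = diag(A₁(x), A₂(x))`. -/
def aMat (x : Fin 7 → ℝ) : Matrix (Fin 6 ⊕ Fin 6) (Fin 6 ⊕ Fin 6) ℝ :=
  Matrix.fromBlocks (A1 x) 0 0 (A2 x)

/-- The set `G = {a(x) : x ∈ ℝ⁷}` of matrices. -/
def GSet : Set (Matrix (Fin 6 ⊕ Fin 6) (Fin 6 ⊕ Fin 6) ℝ) :=
  {A | ∃ x : Fin 7 → ℝ, A = aMat x}
/-- The group law in coordinates. -/
def mulCoord (x y : Fin 7 → ℝ) : Fin 7 → ℝ :=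
  ![x 0 + y 0, x 1 + y 1, x 2 + y 2, x 3 + y 3 + x 1 * y 0, x 4 + y 4 + x 2 * y 0,
    y 5 - x 1 * (y 0 ^ 2 / 2) - x 0 * y 3 - x 0 * x 1 * y 0 + x 5,
    y 6 - x 2 * (y 0 ^ 2 / 2) - x 0 * y 4 - x 0 * x 2 * y 0 + x 6]

/-- The inverse in coordinates. -/
def invCoord (x : Fin 7 → ℝ) : Fin 7 → ℝ :=
  ![-x 0, -x 1, -x 2, x 0 * x 1 - x 3, x 0 * x 2 - x 4,
    x 0 ^ 2 * x 1 / 2 - x 0 * x 3 - x 5, x 0 ^ 2 * x 2 / 2 - x 0 * x 4 - x 6]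

theorem A1_mul (x y : Fin 7 → ℝ) : A1 x * A1 y = A1 (mulCoord x y) := by
  ext i j
  fin_cases i <;> fin_cases j <;>
    simp [A1, mulCoord, Matrix.mul_apply, Fin.sum_univ_succ] <;> ring

theorem A2_mul (x y : Fin 7 → ℝ) : A2 x * A2 y = A2 (mulCoord x y) := by
  ext i j
  fin_cases i <;> fin_cases j <;>
    simp [A2, mulCoord, Matrix.mul_apply, Fin.sum_univ_succ] <;> ring

theorem aMat_mul (x y : Fin 7 → ℝ) : aMat x * aMat y = aMat (mulCoord x y) := by
  simp [aMat, Matrix.fromBlocks_multiply, A1_mul, A2_mul]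

theorem aMat_zero : aMat (fun _ => 0) = 1 := by
  have h1 : A1 (fun _ => 0) = 1 := by
    ext i j
    fin_cases i <;> fin_cases j <;> simp [A1]
  have h2 : A2 (fun _ => 0) = 1 := by
    ext i j
    fin_cases i <;> fin_cases j <;> simp [A2]
  simp [aMat, h1, h2]

theorem mulCoord_inv (x : Fin 7 → ℝ) : mulCoord x (invCoord x) = fun _ => 0 := by
  ext i
  fin_cases i <;> simp [mulCoord, invCoord] <;> ring

/-- `G` is a subgroup of `GL(12,ℝ)`: it contains the identity matrix (which equals `a(0)`),
and it is closed under matrix multiplication and matrix inversion. -/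
theorem stmt_1 :
    aMat (fun _ => 0) = 1 ∧ (1 : Matrix (Fin 6 ⊕ Fin 6) (Fin 6 ⊕ Fin 6) ℝ) ∈ GSet ∧
    (∀ A ∈ GSet, ∀ B ∈ GSet, A * B ∈ GSet) ∧
    (∀ A ∈ GSet, ∃ B ∈ GSet, A * B = 1 ∧ B * A = 1) := by
  refine ⟨aMat_zero, ⟨_, aMat_zero.symm⟩, ?_, ?_⟩
  · rintro _ ⟨x, rfl⟩ _ ⟨y, rfl⟩
    exact ⟨_, aMat_mul x y⟩
  · rintro _ ⟨x, rfl⟩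
    have h : aMat x * aMat (invCoord x) = 1 := by
      rw [aMat_mul, mulCoord_inv, aMat_zero]
    exact ⟨_, ⟨_, rfl⟩, h, mul_eq_one_comm.mp h⟩

end
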